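/- Let n and d be integers with 1 ≤ d < n. For every string x : Fin n → Fin 2, the diagonal entry of H_stab at x equals 1 if wt(x) < d, equals 0 if wt(x) = d, and is at least 1 if wt(x) > d. -/

import Mathlib

open Matrix Finset

/-- Hamming weight of a bit string. -/
def wt {n : ℕ} (x : Fin n → Fin 2) : ℕ := (Finset.univ.filter fun i => x i = 1).card

/-- Diagonal projector `Π_S`: the `(x,x)` entry is `1` iff `x i = 1` for all `i ∈ S`. -/
noncomputable def projOn {n : ℕ} (S : Finset (Fin n)) :
    Matrix (Fin n → Fin 2) (Fin n → Fin 2) ℂ :=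
  Matrix.diagonal fun x => if ∀ i ∈ S, x i = 1 then 1 else 0

/-- `H_{>d} := ∑_{|S| = d+1} Π_S`. -/
noncomputable def Hgt (n d : ℕ) : Matrix (Fin n → Fin 2) (Fin n → Fin 2) ℂ :=
  ∑ S ∈ Finset.powersetCard (d + 1) (Finset.univ : Finset (Fin n)), projOn S

/-- `H_{<d} := ∑_{|S| = d} (I − Π_S)`. -/
noncomputable def Hlt (n d : ℕ) : Matrix (Fin n → Fin 2) (Fin n → Fin 2) ℂ :=
  ∑ S ∈ Finset.powersetCard d (Finset.univ : Finset (Fin n)), (1 - projOn S)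

/-- `H_stab := C(n,d)·H_{>d} + H_{<d} − (C(n,d) − 1)·I`. -/
noncomputable def Hstab (n d : ℕ) : Matrix (Fin n → Fin 2) (Fin n → Fin 2) ℂ :=
  (n.choose d : ℂ) • Hgt n d + Hlt n d - ((n.choose d : ℂ) - 1) • 1

lemma sum_proj_aux {n : ℕ} (k : ℕ) (x : Fin n → Fin 2) :
    ∑ S ∈ Finset.powersetCard k (Finset.univ : Finset (Fin n)), projOn S x x
      = ((wt x).choose k : ℂ) := by
  simp only [projOn, Matrix.diagonal_apply_eq]
  rw [Finset.sum_boole, wt, ← Finset.card_powersetCard]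
  congr 2
  ext S
  simp only [Finset.mem_filter, Finset.mem_powersetCard, Finset.subset_univ, true_and]
  constructor
  · rintro ⟨h, h2⟩
    exact ⟨fun i hi => by simpa using h2 i hi, h⟩
  · rintro ⟨h, h2⟩
    exact ⟨h2, fun i hi => by simpa using h hi⟩

lemma Hstab_diag_aux (n d : ℕ) (x : Fin n → Fin 2) :
    Hstab n d x x = (n.choose d : ℂ) * ((wt x).choose (d + 1) : ℂ)
      - ((wt x).choose d : ℂ) + 1 := by
  have h1 : Hgt n d x x = ((wt x).choose (d + 1) : ℂ) := by
    rw [Hgt, Matrix.sum_apply, sum_proj_aux]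
  have h2 : Hlt n d x x = (n.choose d : ℂ) - ((wt x).choose d : ℂ) := by
    rw [Hlt, Matrix.sum_apply]
    simp only [Matrix.sub_apply, Matrix.one_apply_eq]
    rw [Finset.sum_sub_distrib, sum_proj_aux]
    simp
  simp only [Hstab, Matrix.sub_apply, Matrix.add_apply, Matrix.smul_apply, h1, h2,
    Matrix.one_apply_eq, smul_eq_mul]
  ring

theorem stmt3 (n d : ℕ) (hd1 : 1 ≤ d) (hdn : d < n) (x : Fin n → Fin 2) :
    (wt x < d → Hstab n d x x = 1) ∧
    (wt x = d → Hstab n d x x = 0) ∧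
    (wt x > d → ∃ r : ℝ, 1 ≤ r ∧ Hstab n d x x = (r : ℂ)) := by
  rw [Hstab_diag_aux]
  refine ⟨fun h => ?_, fun h => ?_, fun h => ?_⟩
  · rw [Nat.choose_eq_zero_of_lt h, Nat.choose_eq_zero_of_lt (Nat.lt_succ_of_lt h)]
    simp
  · rw [h]
    simp
  · refine ⟨(n.choose d : ℝ) * ((wt x).choose (d + 1) : ℝ) - ((wt x).choose d : ℝ) + 1,
      ?_, by push_cast; ring⟩
    have hw : wt x ≤ n := by
      simpa [wt] using Finset.card_le_univ (Finset.univ.filter fun i => x i = 1)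
    have h1 : (wt x).choose d ≤ n.choose d := Nat.choose_le_choose d hw
    have h2 : 0 < (wt x).choose (d + 1) := Nat.choose_pos h
    have h3 : (wt x).choose d ≤ n.choose d * (wt x).choose (d + 1) :=
      h1.trans (Nat.le_mul_of_pos_right _ h2)
    have h4 : ((wt x).choose d : ℝ) ≤ (n.choose d : ℝ) * ((wt x).choose (d + 1) : ℝ) := by
      exact_mod_cast h3
    linarith
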